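/- Let d ≥ 1, q > 0, and let C ∈ ℝ^{d×d} be symmetric positive definite with Cholesky factor L (so C = L Lᵀ). Let S be uniformly distributed on the unit sphere S^{d−1} ⊂ ℝ^d, let V be an independent random variable with the Gamma(d/2, 1/2) (chi-squared with d degrees of freedom) distribution, and set R = V^{1/q}. Then the random vector u = R·L·S has the multivariate q-exponential density p_d(u; 0, C, q) = (q/2)(2π)^{−d/2} det(C)^{−1/2} r(u)^{(q/2−1)(d/2)} exp{−(1/2) r(u)^{q/2}} with r(u) = uᵀ C^{−1} u; equivalently, the pushforward of the product of the uniform probability measure on the unit sphere and the Gamma(d/2, 1/2) measure under the map (s, v) ↦ v^{1/q} L s equals the probability measure on ℝ^d with density p_d(·; 0, C, q). -/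

import Mathlib

open Real MeasureTheory Matrix ProbabilityTheory

/-- The multivariate q-exponential density `q-ED(0, C)` on `ℝ^d`. -/
noncomputable def qEDdensity {n : Type*} [Fintype n] [DecidableEq n]
    (q : ℝ) (μ : n → ℝ) (C : Matrix n n ℝ) (u : n → ℝ) : ℝ :=
  q / 2 * (2 * Real.pi) ^ (-(Fintype.card n : ℝ) / 2) * C.det ^ (-(1 : ℝ) / 2) *
    ((u - μ) ⬝ᵥ (C⁻¹ *ᵥ (u - μ))) ^ ((q / 2 - 1) * ((Fintype.card n : ℝ) / 2)) *
    Real.exp (-(1 / 2) * ((u - μ) ⬝ᵥ (C⁻¹ *ᵥ (u - μ))) ^ (q / 2))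

/-- The uniform probability measure on the unit sphere of `ℝ^d`
(the normalized spherical measure). -/
noncomputable def uniformSphere (d : ℕ) :
    Measure (Metric.sphere (0 : EuclideanSpace ℝ (Fin d)) 1) :=
  ((volume : Measure (EuclideanSpace ℝ (Fin d))).toSphere Set.univ)⁻¹ •
    (volume : Measure (EuclideanSpace ℝ (Fin d))).toSphere

/-!
In polar coordinates Lebesgue measure is `σ ⊗ r^(d-1) dr`, with `σ` the surface measure of the unit
sphere, so `R S` has density `g (‖y‖²)` as soon as `R` has density `|σ| r^(d-1) g (r²)`. Applying
`L` then replaces `‖y‖²` by `uᵀ (L Lᵀ)⁻¹ u` and divides by `|det L| = det (L Lᵀ)^(1/2)`. What is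
specific to `q-ED` is that the density of `V^(1/q)`, for `V ~ χ²_d`, is of this form, which follows
from `|σ| = 2 π^(d/2) / Γ(d/2)`.
-/

open Set Metric
open scoped ENNReal

lemma map_withDensity_comp {α β : Type*} [MeasurableSpace α] [MeasurableSpace β]
    (μ : Measure α) {φ : α → β} (hφ : Measurable φ) {h : β → ℝ≥0∞} (hh : Measurable h) :
    (μ.withDensity fun x => h (φ x)).map φ = (μ.map φ).withDensity h := by
  ext s hs
  rw [Measure.map_apply hφ hs, withDensity_apply _ (hφ hs), withDensity_apply _ hs,
    setLIntegral_map hs hh hφ]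

section PolarCoordinates

lemma map_subtypeVal_volumeIoiPow (n : ℕ) :
    (Measure.volumeIoiPow n).map Subtype.val =
      (volume.restrict (Ioi (0 : ℝ))).withDensity fun r => ENNReal.ofReal (r ^ n) := by
  rw [Measure.volumeIoiPow,
    map_withDensity_comp _ measurable_subtype_coe (h := fun r : ℝ => ENNReal.ofReal (r ^ n))
      (by fun_prop),
    map_comap_subtype_coe measurableSet_Ioi]

variable {E : Type*} [NormedAddCommGroup E] [NormedSpace ℝ E] [MeasurableSpace E] [BorelSpace E]
  [FiniteDimensional ℝ E] [Nontrivial E] (μ : Measure E) [μ.IsAddHaarMeasure]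

lemma map_smul_toSphere_prod_pow :
    (μ.toSphere.prod ((volume.restrict (Ioi (0 : ℝ))).withDensity fun r =>
        ENNReal.ofReal (r ^ (Module.finrank ℝ E - 1)))).map
      (fun p : sphere (0 : E) 1 × ℝ => p.2 • (p.1 : E)) = μ := by
  have polar_inv := μ.measurePreserving_homeomorphUnitSphereProd.symm
    (homeomorphUnitSphereProd E).toMeasurableEquiv
  calc
    _ = (μ.toSphere.prod (Measure.volumeIoiPow (Module.finrank ℝ E - 1))).map
          (fun p => ((homeomorphUnitSphereProd E).symm p : E)) := by
      rw [← map_subtypeVal_volumeIoiPow, ← Measure.map_id (μ := μ.toSphere),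
        Measure.map_prod_map _ _ measurable_id measurable_subtype_coe,
        Measure.map_map (by fun_prop) (by fun_prop), Measure.map_id]
      rfl
    _ = (μ.comap (Subtype.val : ({0}ᶜ : Set E) → E)).map Subtype.val := by
      rw [← polar_inv.map_eq, Measure.map_map measurable_subtype_coe polar_inv.measurable]
      rfl
    _ = μ := by
      rw [map_comap_subtype_coe (measurableSet_singleton _).compl, restrict_compl_singleton]

lemma map_smul_toSphere_prod_withDensity {g : ℝ → ℝ≥0∞} (hg : Measurable g) :
    (μ.toSphere.prod ((volume.restrict (Ioi (0 : ℝ))).withDensity fun r =>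
        ENNReal.ofReal (r ^ (Module.finrank ℝ E - 1)) * g r)).map
      (fun p : sphere (0 : E) 1 × ℝ => p.2 • (p.1 : E)) = μ.withDensity fun x => g ‖x‖ := by
  set ρ := (volume.restrict (Ioi (0 : ℝ))).withDensity fun r =>
    ENNReal.ofReal (r ^ (Module.finrank ℝ E - 1))
  have norm_smul_ae : ∀ᵐ p ∂μ.toSphere.prod ρ, ‖p.2 • (p.1 : E)‖ = p.2 := by
    have radius_pos : ∀ᵐ r ∂ρ, 0 < r :=
      (withDensity_absolutelyContinuous _ _).ae_le (ae_restrict_mem measurableSet_Ioi)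
    filter_upwards [Measure.quasiMeasurePreserving_snd.ae radius_pos] with p hp
    rw [norm_smul, norm_eq_of_mem_sphere, mul_one, Real.norm_of_nonneg hp.le]
  calc
    _ = ((μ.toSphere.prod ρ).withDensity fun p => g p.2).map
          (fun p : sphere (0 : E) 1 × ℝ => p.2 • (p.1 : E)) := by
      rw [← prod_withDensity_right hg, ← withDensity_mul _ (by fun_prop) hg]
      rfl
    _ = ((μ.toSphere.prod ρ).withDensity fun p => g ‖p.2 • (p.1 : E)‖).map
          (fun p : sphere (0 : E) 1 × ℝ => p.2 • (p.1 : E)) := by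
      rw [withDensity_congr_ae]
      filter_upwards [norm_smul_ae] with p hp
      rw [hp]
    _ = μ.withDensity fun x => g ‖x‖ := by
      rw [map_withDensity_comp (μ.toSphere.prod ρ) (φ := fun p => p.2 • (p.1 : E))
        (h := fun x => g ‖x‖) (by fun_prop) (by fun_prop), map_smul_toSphere_prod_pow]

end PolarCoordinates

section Elliptical

variable {ι : Type*} [Fintype ι] [DecidableEq ι]

lemma mulVec_dotProduct_inv_mul_transpose_mulVec {R : Type*} [CommRing R] {L : Matrix ι ι R}
    (hL : IsUnit L.det) (y : ι → R) :
    (L *ᵥ y) ⬝ᵥ ((L * Lᵀ)⁻¹ *ᵥ (L *ᵥ y)) = y ⬝ᵥ y := by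
  have inv_mulVec : (L * Lᵀ)⁻¹ *ᵥ (L *ᵥ y) = (L⁻¹)ᵀ *ᵥ y := by
    rw [Matrix.mul_inv_rev, mulVec_mulVec, Matrix.mul_assoc, nonsing_inv_mul _ hL,
      Matrix.mul_one, transpose_nonsing_inv]
  rw [inv_mulVec, mulVec_transpose, dotProduct_comm, ← dotProduct_mulVec, mulVec_mulVec,
    nonsing_inv_mul _ hL, one_mulVec]

lemma det_mul_transpose_self_rpow_neg_half (L : Matrix ι ι ℝ) :
    (L * Lᵀ).det ^ (-(1 : ℝ) / 2) = |L.det⁻¹| := by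
  rw [det_mul, det_transpose, neg_div, Real.rpow_neg (mul_self_nonneg _), ← Real.sqrt_eq_rpow,
    Real.sqrt_mul_self_eq_abs, abs_inv]

lemma map_mulVec_volume_euclideanSpace {L : Matrix ι ι ℝ} (hL : L.det ≠ 0) :
    (volume : Measure (EuclideanSpace ℝ ι)).map (fun y => L *ᵥ y.ofLp) =
      ENNReal.ofReal ((L * Lᵀ).det ^ (-(1 : ℝ) / 2)) • volume := by
  rw [det_mul_transpose_self_rpow_neg_half, ← Real.map_matrix_volume_pi_eq_smul_volume_pi hL,
    ← (PiLp.volume_preserving_ofLp ι).map_eq, Measure.map_map (by fun_prop) (by fun_prop)]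
  rfl

lemma map_mulVec_withDensity_norm_sq {L : Matrix ι ι ℝ} (hL : L.det ≠ 0) {f : ℝ → ℝ≥0∞}
    (hf : Measurable f) :
    (volume.withDensity fun y : EuclideanSpace ℝ ι => f (‖y‖ ^ 2)).map (fun y => L *ᵥ y.ofLp) =
      volume.withDensity fun u =>
        ENNReal.ofReal ((L * Lᵀ).det ^ (-(1 : ℝ) / 2)) * f (u ⬝ᵥ ((L * Lᵀ)⁻¹ *ᵥ u)) := by
  have norm_sq_eq (y : EuclideanSpace ℝ ι) :
      ‖y‖ ^ 2 = (L *ᵥ y.ofLp) ⬝ᵥ ((L * Lᵀ)⁻¹ *ᵥ (L *ᵥ y.ofLp)) := by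
    rw [mulVec_dotProduct_inv_mul_transpose_mulVec hL.isUnit, EuclideanSpace.real_norm_sq_eq]
    simp only [dotProduct, sq]
  have generator_measurable : Measurable fun u : ι → ℝ => f (u ⬝ᵥ ((L * Lᵀ)⁻¹ *ᵥ u)) :=
    hf.comp (by fun_prop)
  simp_rw [norm_sq_eq]
  rw [map_withDensity_comp _ (φ := fun y : EuclideanSpace ℝ ι => L *ᵥ y.ofLp) (by fun_prop)
    generator_measurable, map_mulVec_volume_euclideanSpace hL, withDensity_smul_measure,
    ← withDensity_smul _ generator_measurable]
  rfl

theorem map_smul_mulVec_toSphere_prod_withDensity [Nonempty ι] {L : Matrix ι ι ℝ}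
    (hL : L.det ≠ 0) {f : ℝ → ℝ≥0∞} (hf : Measurable f) :
    ((volume : Measure (EuclideanSpace ℝ ι)).toSphere.prod
        ((volume.restrict (Ioi (0 : ℝ))).withDensity fun r =>
          ENNReal.ofReal (r ^ (Fintype.card ι - 1)) * f (r ^ 2))).map
      (fun p => p.2 • L *ᵥ (p.1 : EuclideanSpace ℝ ι).ofLp) =
      volume.withDensity fun u =>
        ENNReal.ofReal ((L * Lᵀ).det ^ (-(1 : ℝ) / 2)) * f (u ⬝ᵥ ((L * Lᵀ)⁻¹ *ᵥ u)) := by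
  rw [← map_mulVec_withDensity_norm_sq hL hf,
    ← map_smul_toSphere_prod_withDensity volume (g := fun r => f (r ^ 2)) (by fun_prop),
    Measure.map_map (by fun_prop) (by fun_prop), finrank_euclideanSpace]
  simp only [Function.comp_def, WithLp.ofLp_smul, mulVec_smul]

end Elliptical

section RadialLaw

lemma map_rpow_withDensity_Ioi {q : ℝ} (hq : q ≠ 0) :
    ((volume.restrict (Ioi (0 : ℝ))).withDensity fun r =>
      ENNReal.ofReal (|q| * r ^ (q - 1))).map (· ^ q) = volume.restrict (Ioi 0) := by
  have rpow_image : (· ^ q) '' Ioi (0 : ℝ) = Ioi 0 := by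
    refine Subset.antisymm ?_ fun v hv => ?_
    · rintro _ ⟨r, hr, rfl⟩
      exact Real.rpow_pos_of_pos hr q
    · exact ⟨v ^ q⁻¹, Real.rpow_pos_of_pos hv _, Real.rpow_inv_rpow (mem_Ioi.mp hv).le hq⟩
  have rpow_deriv (r : ℝ) (hr : r ∈ Ioi 0) :
      HasFDerivWithinAt (· ^ q) (ContinuousLinearMap.toSpanSingleton ℝ (q * r ^ (q - 1)))
        (Ioi 0) r :=
    (Real.hasDerivAt_rpow_const (Or.inl (mem_Ioi.mp hr).ne')).hasFDerivAt.hasFDerivWithinAt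
  have density_eq : (fun r : ℝ => ENNReal.ofReal (|q| * r ^ (q - 1)))
      =ᵐ[volume.restrict (Ioi 0)] fun r =>
        ENNReal.ofReal |(ContinuousLinearMap.toSpanSingleton ℝ (q * r ^ (q - 1))).det| := by
    filter_upwards [ae_restrict_mem measurableSet_Ioi] with r hr
    rw [ContinuousLinearMap.det_toSpanSingleton, abs_mul, abs_of_pos (Real.rpow_pos_of_pos hr _)]
  rw [withDensity_congr_ae density_eq, map_withDensity_abs_det_fderiv_eq_addHaar volume
    measurableSet_Ioi.nullMeasurableSet rpow_deriv
    ((Real.rpow_left_injOn hq).mono Ioi_subset_Ici_self), rpow_image]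

lemma map_rpow_inv_withDensity_Ioi {q : ℝ} (hq : q ≠ 0) {f : ℝ → ℝ≥0∞} (hf : Measurable f) :
    ((volume.restrict (Ioi (0 : ℝ))).withDensity f).map (· ^ q⁻¹) =
      (volume.restrict (Ioi 0)).withDensity fun r =>
        ENNReal.ofReal (|q| * r ^ (q - 1)) * f (r ^ q) := by
  set ν := (volume.restrict (Ioi (0 : ℝ))).withDensity fun r =>
    ENNReal.ofReal (|q| * r ^ (q - 1)) * f (r ^ q)
  have map_rpow : ν.map (· ^ q) = (volume.restrict (Ioi (0 : ℝ))).withDensity f := by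
    rw [← map_rpow_withDensity_Ioi hq, ← map_withDensity_comp _ (by fun_prop) hf,
      ← withDensity_mul _ (by fun_prop) (by fun_prop)]
    rfl
  have rpow_rpow_inv_ae : (fun r : ℝ => (r ^ q) ^ q⁻¹) =ᵐ[ν] id := by
    have pos_ae : ∀ᵐ r ∂ν, 0 < r :=
      (withDensity_absolutelyContinuous _ _).ae_le (ae_restrict_mem measurableSet_Ioi)
    filter_upwards [pos_ae] with r hr using Real.rpow_rpow_inv hr.le hq
  rw [← map_rpow, Measure.map_map (by fun_prop) (by fun_prop), Function.comp_def,
    Measure.map_congr rpow_rpow_inv_ae, Measure.map_id]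

lemma gammaMeasure_eq_withDensity_Ioi (a b : ℝ) :
    gammaMeasure a b = (volume.restrict (Ioi 0)).withDensity (gammaPDF a b) := by
  rw [Measure.restrict_congr_set Ioi_ae_eq_Ici, ← withDensity_indicator measurableSet_Ici,
    gammaMeasure]
  congr 1
  refine (indicator_eq_self.mpr fun v hv => ?_).symm
  contrapose! hv
  simpa using gammaPDF_of_neg (not_le.mp hv)

lemma toSphere_volume_univ (E : Type*) [NormedAddCommGroup E] [InnerProductSpace ℝ E]
    [FiniteDimensional ℝ E] [MeasurableSpace E] [BorelSpace E] [Nontrivial E] :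
    (volume : Measure E).toSphere univ =
      ENNReal.ofReal (2 * π ^ ((Module.finrank ℝ E : ℝ) / 2) /
        Real.Gamma ((Module.finrank ℝ E : ℝ) / 2)) := by
  have finrank_pos : (0 : ℝ) < Module.finrank ℝ E := by exact_mod_cast Module.finrank_pos
  rw [Measure.toSphere_apply_univ, InnerProductSpace.volume_ball, ENNReal.ofReal_one, one_pow,
    one_mul, ← ENNReal.ofReal_natCast, ← ENNReal.ofReal_mul finrank_pos.le,
    Real.Gamma_add_one (half_pos finrank_pos).ne', Real.sqrt_eq_rpow,
    ← Real.rpow_mul_natCast Real.pi_pos.le, one_div_mul_eq_div]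
  congr 1
  field_simp

end RadialLaw

section QExponential

/-- The density generator of `q-ED_d`: up to the factor `|C|^{-1/2}`, the density of `q-ED_d(0, C)`
is this function of the quadratic form `r(u) = uᵀ C⁻¹ u`. -/
noncomputable def qEDGenerator (q : ℝ) (d : ℕ) (t : ℝ) : ℝ :=
  q / 2 * (2 * π) ^ (-(d : ℝ) / 2) * t ^ ((q / 2 - 1) * ((d : ℝ) / 2)) *
    Real.exp (-(1 / 2) * t ^ (q / 2))

lemma measurable_qEDGenerator (q : ℝ) (d : ℕ) : Measurable (qEDGenerator q d) := by
  unfold qEDGenerator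
  fun_prop

lemma qEDdensity_eq_qEDGenerator {ι : Type*} [Fintype ι] [DecidableEq ι] (q : ℝ) (m : ι → ℝ)
    (C : Matrix ι ι ℝ) (u : ι → ℝ) :
    qEDdensity q m C u =
      C.det ^ (-(1 : ℝ) / 2) *
        qEDGenerator q (Fintype.card ι) ((u - m) ⬝ᵥ (C⁻¹ *ᵥ (u - m))) := by
  unfold qEDdensity qEDGenerator
  ring

lemma qEDGenerator_sq {r : ℝ} (hr : 0 ≤ r) (q : ℝ) (d : ℕ) :
    qEDGenerator q d (r ^ 2) =
      q / 2 * (2 * π) ^ (-(d : ℝ) / 2) * r ^ ((q / 2 - 1) * d) * Real.exp (-(1 / 2) * r ^ q) := by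
  rw [qEDGenerator, ← Real.rpow_two, ← Real.rpow_mul hr, ← Real.rpow_mul hr,
    show 2 * ((q / 2 - 1) * ((d : ℝ) / 2)) = (q / 2 - 1) * d by ring,
    mul_div_cancel₀ q two_ne_zero]

lemma mul_gammaPDFReal_rpow_eq_mul_qEDGenerator_sq {d : ℕ} (hd : d ≠ 0) (q : ℝ) {r : ℝ}
    (hr : 0 < r) :
    q * r ^ (q - 1) * gammaPDFReal ((d : ℝ) / 2) (1 / 2) (r ^ q) =
      2 * π ^ ((d : ℝ) / 2) / Real.Gamma ((d : ℝ) / 2) *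
        (r ^ (d - 1) * qEDGenerator q d (r ^ 2)) := by
  have rpow_eq : r ^ (q - 1) * (r ^ q) ^ ((d : ℝ) / 2 - 1) =
      r ^ (d - 1) * r ^ ((q / 2 - 1) * d) := by
    rw [← Real.rpow_mul hr.le, ← Real.rpow_natCast, Nat.cast_pred (Nat.pos_of_ne_zero hd),
      ← Real.rpow_add hr, ← Real.rpow_add hr]
    ring_nf
  have half_rpow_eq : (1 / 2 : ℝ) ^ ((d : ℝ) / 2) =
      π ^ ((d : ℝ) / 2) * (2 * π) ^ (-(d : ℝ) / 2) := by
    rw [neg_div, Real.rpow_neg (by positivity), Real.mul_rpow zero_le_two Real.pi_pos.le, one_div,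
      Real.inv_rpow zero_le_two]
    field_simp
  rw [qEDGenerator_sq hr.le, gammaPDFReal, if_pos (by positivity), half_rpow_eq, ← neg_mul]
  linear_combination q * π ^ ((d : ℝ) / 2) * (2 * π) ^ (-(d : ℝ) / 2) /
    Real.Gamma ((d : ℝ) / 2) * Real.exp (-(1 / 2) * r ^ q) * rpow_eq

lemma map_rpow_inv_gammaMeasure_half {d : ℕ} (hd : d ≠ 0) {q : ℝ} (hq : 0 < q) :
    (gammaMeasure ((d : ℝ) / 2) (1 / 2)).map (· ^ q⁻¹) =
      (volume : Measure (EuclideanSpace ℝ (Fin d))).toSphere univ •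
        (volume.restrict (Ioi (0 : ℝ))).withDensity fun r =>
          ENNReal.ofReal (r ^ (d - 1)) * ENNReal.ofReal (qEDGenerator q d (r ^ 2)) := by
  have : NeZero d := ⟨hd⟩
  have generator_measurable := measurable_qEDGenerator q d
  have gammaPDF_measurable : Measurable (gammaPDF ((d : ℝ) / 2) (1 / 2)) :=
    (measurable_gammaPDFReal _ _).ennreal_ofReal
  rw [gammaMeasure_eq_withDensity_Ioi, map_rpow_inv_withDensity_Ioi hq.ne' gammaPDF_measurable,
    ← withDensity_smul _ (by fun_prop), toSphere_volume_univ, finrank_euclideanSpace_fin]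
  refine withDensity_congr_ae ?_
  filter_upwards [ae_restrict_mem measurableSet_Ioi] with r (hr : 0 < r)
  rw [Pi.smul_apply, smul_eq_mul, gammaPDF, abs_of_pos hq, ← ENNReal.ofReal_mul (by positivity),
    ← ENNReal.ofReal_mul (by positivity), ← ENNReal.ofReal_mul (by positivity),
    mul_gammaPDFReal_rpow_eq_mul_qEDGenerator_sq hd q hr]

end QExponential

section UniformSphere

variable {d : ℕ}

instance : SFinite (uniformSphere d) :=
  inferInstanceAs (SFinite (_ • (volume : Measure (EuclideanSpace ℝ (Fin d))).toSphere))

lemma uniformSphere_prod_toSphere_univ_smul [NeZero d] {β : Type*} [MeasurableSpace β]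
    (ρ : Measure β) [SFinite ρ] :
    (uniformSphere d).prod ((volume : Measure (EuclideanSpace ℝ (Fin d))).toSphere univ • ρ) =
      (volume : Measure (EuclideanSpace ℝ (Fin d))).toSphere.prod ρ := by
  rw [uniformSphere, Measure.prod_smul_left, Measure.prod_smul_right, smul_smul,
    ENNReal.inv_mul_cancel (Measure.measure_univ_ne_zero.mpr (Measure.toSphere_ne_zero _))
      (measure_ne_top _ _), one_smul]

end UniformSphere

/-- Stochastic representation of the multivariate q-exponential distribution:
if `S` is uniform on the unit sphere, `V ~ Gamma(d/2, 1/2) = χ²_d` independent of `S`,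
`R = V^{1/q}` and `C = L Lᵀ`, then `u = R·L·S ~ q-ED_d(0, C)`: the pushforward of the
product measure under `(s, v) ↦ v^{1/q} L s` is the measure with density
`p_d(·; 0, C, q)`. -/
theorem qED_stochastic_representation
    (d : ℕ) (hd : 1 ≤ d) (q : ℝ) (hq : 0 < q)
    (C L : Matrix (Fin d) (Fin d) ℝ) (hC : C.PosDef) (hL : C = L * Lᵀ) :
    Measure.map
        (fun p : Metric.sphere (0 : EuclideanSpace ℝ (Fin d)) 1 × ℝ =>
          fun i : Fin d =>
            p.2 ^ (1 / q) * (L *ᵥ (fun j : Fin d => (p.1 : EuclideanSpace ℝ (Fin d)) j)) i)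
        ((uniformSphere d).prod (gammaMeasure ((d : ℝ) / 2) (1 / 2))) =
      volume.withDensity fun u : Fin d → ℝ => ENNReal.ofReal (qEDdensity q 0 C u) := by
  subst hL
  have : NeZero d := ⟨Nat.one_le_iff_ne_zero.mp hd⟩
  have : IsProbabilityMeasure (gammaMeasure ((d : ℝ) / 2) (1 / 2)) :=
    isProbabilityMeasure_gammaMeasure (by positivity) one_half_pos
  have hLdet : L.det ≠ 0 := fun h => hC.det_pos.ne' (by rw [det_mul, h, zero_mul])
  calc
    _ = ((uniformSphere d).prod ((gammaMeasure ((d : ℝ) / 2) (1 / 2)).map (· ^ q⁻¹))).map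
          (fun p => p.2 • L *ᵥ (p.1 : EuclideanSpace ℝ (Fin d)).ofLp) := by
      rw [← Measure.map_id (μ := uniformSphere d),
        Measure.map_prod_map _ _ measurable_id (by fun_prop),
        Measure.map_map (by fun_prop) (by fun_prop), Measure.map_id, ← one_div]
      rfl
    _ = volume.withDensity fun u => ENNReal.ofReal ((L * Lᵀ).det ^ (-(1 : ℝ) / 2)) *
          ENNReal.ofReal (qEDGenerator q d (u ⬝ᵥ ((L * Lᵀ)⁻¹ *ᵥ u))) := by
      rw [map_rpow_inv_gammaMeasure_half (NeZero.ne d) hq, uniformSphere_prod_toSphere_univ_smul,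
        ← map_smul_mulVec_toSphere_prod_withDensity hLdet
          (measurable_qEDGenerator q d).ennreal_ofReal, Fintype.card_fin]
    _ = _ := by
      simp only [qEDdensity_eq_qEDGenerator, sub_zero, Fintype.card_fin,
        ENNReal.ofReal_mul (Real.rpow_nonneg hC.det_pos.le _)]
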